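/- Let A₁, Ã₁ ∈ ℝ^{m×r₁}, A₂, Ã₂ ∈ ℝ^{m×r₂}, and A₃, Ã₃ ∈ ℝ^{p×r₃} all have orthonormal columns, and let W, W̃ ∈ ℝ^{m×(p·m)} be arbitrary matrices (with columns indexed by Fin p × Fin m). Then ‖Ã₁ᵀ W̃ (Ã₃ ⊗ Ã₂) − A₁ᵀ W (A₃ ⊗ A₂)‖_F ≤ ‖W̃ − W‖_F + ‖W‖_F (‖Ã₁ − A₁‖_F + ‖Ã₂ − A₂‖_F + ‖Ã₃ − A₃‖_F). -/

import Mathlib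

open Matrix
open scoped Kronecker

/-- The Frobenius norm of a real matrix. -/
noncomputable def frobNorm {m n : Type*} [Fintype m] [Fintype n] (A : Matrix m n ℝ) : ℝ :=
  Real.sqrt (∑ i, ∑ j, (A i j) ^ 2)

section Helpers
variable {l m n k : Type*} [Fintype l] [Fintype m] [Fintype n] [Fintype k]

attribute [local instance] Matrix.frobeniusNormedAddCommGroup

theorem frobNorm_eq_norm (A : Matrix m n ℝ) : frobNorm A = ‖A‖ := by
  rw [Matrix.frobenius_norm_def, frobNorm, Real.sqrt_eq_rpow]
  simp

theorem frobNorm_add_le (A B : Matrix m n ℝ) : frobNorm (A + B) ≤ frobNorm A + frobNorm B := by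
  simp only [frobNorm_eq_norm]; exact norm_add_le A B

theorem frobNorm_mul_le (A : Matrix l m ℝ) (B : Matrix m n ℝ) :
    frobNorm (A * B) ≤ frobNorm A * frobNorm B := by
  simp only [frobNorm_eq_norm]; exact Matrix.frobenius_norm_mul A B

theorem frobNorm_tr (A : Matrix m n ℝ) : frobNorm Aᵀ = frobNorm A := by
  simp only [frobNorm_eq_norm]; exact Matrix.frobenius_norm_transpose A

theorem frobNorm_nonneg' (A : Matrix m n ℝ) : 0 ≤ frobNorm A := Real.sqrt_nonneg _

theorem sum_sq_eq_trace (A : Matrix m n ℝ) : ∑ i, ∑ j, (A i j) ^ 2 = (A * Aᵀ).trace := by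
  simp [Matrix.trace, Matrix.mul_apply, sq]

theorem frobNorm_mul_iso [DecidableEq k] (X : Matrix m n ℝ) (Q : Matrix n k ℝ)
    (hQ : Qᵀ * Q = 1) : frobNorm (X * Q) ≤ frobNorm X := by
  apply Real.sqrt_le_sqrt
  have h0 : 0 ≤ ∑ i, ∑ j, ((X - X * Q * Qᵀ) i j) ^ 2 := by positivity
  have h1 : (X - X * Q * Qᵀ) * (X - X * Q * Qᵀ)ᵀ = X * Xᵀ - (X * Q) * (X * Q)ᵀ := by
    have h2 : X * Q * Qᵀ * (X * Q * Qᵀ)ᵀ = (X * Q) * (X * Q)ᵀ := by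
      calc _ = X * Q * (Qᵀ * Q) * (X * Q)ᵀ := by
            simp only [Matrix.transpose_mul, Matrix.transpose_transpose, Matrix.mul_assoc]
        _ = _ := by rw [hQ, Matrix.mul_one]
    rw [Matrix.transpose_sub, Matrix.sub_mul, Matrix.mul_sub, Matrix.mul_sub, h2]
    simp only [Matrix.transpose_mul, Matrix.transpose_transpose, Matrix.mul_assoc]
    abel
  rw [sum_sq_eq_trace, h1, Matrix.trace_sub] at h0
  rw [sum_sq_eq_trace, sum_sq_eq_trace]
  linarith

theorem frobNorm_iso_mul [DecidableEq k] (X : Matrix n m ℝ) (Q : Matrix n k ℝ)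
    (hQ : Qᵀ * Q = 1) : frobNorm (Qᵀ * X) ≤ frobNorm X := by
  rw [← frobNorm_tr (Qᵀ * X), ← frobNorm_tr X, Matrix.transpose_mul, Matrix.transpose_transpose]
  exact frobNorm_mul_iso _ _ hQ

theorem frobNorm_mul_kron_one [DecidableEq l] (W : Matrix m (n × l) ℝ) (D : Matrix n k ℝ) :
    frobNorm (W * (D ⊗ₖ (1 : Matrix l l ℝ))) ≤ frobNorm W * frobNorm D := by
  have h := frobNorm_mul_le (Matrix.of fun (a : m × l) (b : n) => W a.1 (b, a.2)) D
  convert h using 2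
  · unfold frobNorm
    congr 1
    simp only [Fintype.sum_prod_type]
    refine Finset.sum_congr rfl fun i _ => ?_
    rw [Finset.sum_comm]
    simp [Matrix.mul_apply, Fintype.sum_prod_type, Matrix.one_apply]
  · unfold frobNorm
    congr 1
    simp only [Fintype.sum_prod_type]
    refine Finset.sum_congr rfl fun i _ => ?_
    rw [Finset.sum_comm]
    simp

theorem frobNorm_mul_one_kron [DecidableEq l] (W : Matrix m (l × n) ℝ) (D : Matrix n k ℝ) :
    frobNorm (W * ((1 : Matrix l l ℝ) ⊗ₖ D)) ≤ frobNorm W * frobNorm D := by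
  have h := frobNorm_mul_le (Matrix.of fun (a : m × l) (b : n) => W a.1 (a.2, b)) D
  convert h using 2
  · unfold frobNorm
    congr 1
    simp only [Fintype.sum_prod_type]
    refine Finset.sum_congr rfl fun i _ => Finset.sum_congr rfl fun j _ =>
      Finset.sum_congr rfl fun c _ => ?_
    rw [Matrix.mul_apply, Fintype.sum_prod_type, Finset.sum_eq_single j]
    · simp [Matrix.mul_apply]
    · intro b _ hb
      simp [Matrix.one_apply, hb]
    · simp
  · unfold frobNorm
    congr 1
    simp [Fintype.sum_prod_type]

theorem kron_iso {l' k' : Type*} [Fintype l'] [Fintype k'] [DecidableEq k] [DecidableEq k']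
    (A : Matrix l k ℝ) (B : Matrix l' k' ℝ) (hA : Aᵀ * A = 1) (hB : Bᵀ * B = 1) :
    (A ⊗ₖ B)ᵀ * (A ⊗ₖ B) = 1 := by
  have : (A ⊗ₖ B)ᵀ = Aᵀ ⊗ₖ Bᵀ := (Matrix.kroneckerMap_transpose _ A B).symm
  rw [this, ← Matrix.mul_kronecker_mul, hA, hB, Matrix.one_kronecker_one]

end Helpers

/-- Telescoping perturbation bound for the recovered core matricization
`G₍₁₎ = A₁ᵀ W (A₃ ⊗ A₂)`: if all factor matrices have orthonormal columns, then
`‖Ã₁ᵀ W̃ (Ã₃ ⊗ Ã₂) − A₁ᵀ W (A₃ ⊗ A₂)‖_F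
  ≤ ‖W̃ − W‖_F + ‖W‖_F (‖Ã₁ − A₁‖_F + ‖Ã₂ − A₂‖_F + ‖Ã₃ − A₃‖_F)`. -/
theorem core_matricization_perturbation
    (m p r₁ r₂ r₃ : ℕ)
    (A₁ At₁ : Matrix (Fin m) (Fin r₁) ℝ)
    (A₂ At₂ : Matrix (Fin m) (Fin r₂) ℝ)
    (A₃ At₃ : Matrix (Fin p) (Fin r₃) ℝ)
    (hA₁ : A₁ᵀ * A₁ = 1) (hAt₁ : At₁ᵀ * At₁ = 1)
    (hA₂ : A₂ᵀ * A₂ = 1) (hAt₂ : At₂ᵀ * At₂ = 1)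
    (hA₃ : A₃ᵀ * A₃ = 1) (hAt₃ : At₃ᵀ * At₃ = 1)
    (W Wt : Matrix (Fin m) (Fin p × Fin m) ℝ) :
    frobNorm (At₁ᵀ * Wt * (At₃ ⊗ₖ At₂) - A₁ᵀ * W * (A₃ ⊗ₖ A₂))
      ≤ frobNorm (Wt - W)
        + frobNorm W * (frobNorm (At₁ - A₁) + frobNorm (At₂ - A₂)
            + frobNorm (At₃ - A₃)) := by
  have e : At₁ᵀ * Wt * (At₃ ⊗ₖ At₂) - A₁ᵀ * W * (A₃ ⊗ₖ A₂)
      = At₁ᵀ * (Wt - W) * (At₃ ⊗ₖ At₂) + ((At₁ - A₁)ᵀ * W * (At₃ ⊗ₖ At₂)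
        + (A₁ᵀ * (W * ((1 : Matrix (Fin p) (Fin p) ℝ) ⊗ₖ (At₂ - A₂))
            * (At₃ ⊗ₖ (1 : Matrix (Fin r₂) (Fin r₂) ℝ)))
        + A₁ᵀ * (W * ((At₃ - A₃) ⊗ₖ (1 : Matrix (Fin m) (Fin m) ℝ))
            * ((1 : Matrix (Fin r₃) (Fin r₃) ℝ) ⊗ₖ A₂)))) := by
    rw [Matrix.mul_assoc W, Matrix.mul_assoc W, ← Matrix.mul_kronecker_mul,
      ← Matrix.mul_kronecker_mul, Matrix.one_mul, Matrix.mul_one, Matrix.one_mul, Matrix.mul_one]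
    have e2 : At₃ ⊗ₖ (At₂ - A₂) = At₃ ⊗ₖ At₂ - At₃ ⊗ₖ A₂ := by
      ext ⟨a, b⟩ ⟨c, d⟩; simp [mul_sub]
    have e3 : (At₃ - A₃) ⊗ₖ A₂ = At₃ ⊗ₖ A₂ - A₃ ⊗ₖ A₂ := by
      ext ⟨a, b⟩ ⟨c, d⟩; simp [sub_mul]
    rw [e2, e3]
    simp only [Matrix.transpose_sub, Matrix.mul_sub, Matrix.sub_mul, Matrix.mul_assoc]
    abel
  have hK := kron_iso At₃ At₂ hAt₃ hAt₂
  have b1 : frobNorm (At₁ᵀ * (Wt - W) * (At₃ ⊗ₖ At₂)) ≤ frobNorm (Wt - W) :=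
    (frobNorm_mul_iso _ _ hK).trans (frobNorm_iso_mul _ _ hAt₁)
  have b2 : frobNorm ((At₁ - A₁)ᵀ * W * (At₃ ⊗ₖ At₂)) ≤ frobNorm (At₁ - A₁) * frobNorm W := by
    refine (frobNorm_mul_iso _ _ hK).trans ((frobNorm_mul_le _ _).trans_eq ?_)
    rw [frobNorm_tr]
  have b3 := (frobNorm_iso_mul (W * ((1 : Matrix (Fin p) (Fin p) ℝ) ⊗ₖ (At₂ - A₂))
      * (At₃ ⊗ₖ (1 : Matrix (Fin r₂) (Fin r₂) ℝ))) A₁ hA₁).trans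
    ((frobNorm_mul_iso _ _ (kron_iso At₃ 1 hAt₃ (by simp))).trans (frobNorm_mul_one_kron W _))
  have b4 := (frobNorm_iso_mul (W * ((At₃ - A₃) ⊗ₖ (1 : Matrix (Fin m) (Fin m) ℝ))
      * ((1 : Matrix (Fin r₃) (Fin r₃) ℝ) ⊗ₖ A₂)) A₁ hA₁).trans
    ((frobNorm_mul_iso _ _ (kron_iso 1 A₂ (by simp) hA₂)).trans (frobNorm_mul_kron_one W _))
  rw [e]
  refine (frobNorm_add_le _ _).trans ?_
  refine (add_le_add b1 ((frobNorm_add_le _ _).trans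
    (add_le_add b2 ((frobNorm_add_le _ _).trans (add_le_add b3 b4))))).trans_eq ?_
  ring
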